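/- arXiv:2605.06630 — 3 statements merged into one kernel-verified Lean document; each statement's English description precedes it below -/
import Mathlib

section
/- Let n ≥ 1, σ > 0, let μ* and μ_1, …, μ_N be points of Euclidean space ℝ^n, and let w_1, …, w_N be nonnegative reals with Σ_j w_j = 1. Define the Gaussian densities p(y) = (2πσ²)^{-n/2} exp(-‖y-μ*‖²/(2σ²)) and p_j(y) = (2πσ²)^{-n/2} exp(-‖y-μ_j‖²/(2σ²)), and the mixture q(y) = Σ_j w_j p_j(y). Then the Kullback–Leibler divergence of p from q satisfies ∫_{ℝ^n} p(y) log(p(y)/q(y)) dy ≥ (n/2)(log 2 − 1) − log( Σ_j w_j exp(−‖μ*−μ_j‖²/(4σ²)) ). -/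
open MeasureTheory Finset

/-!
Writing `c = ∫ p q`, the tangent-line bound `log (q / c) ≤ q / c - 1` gives pointwise
`p log (p / q) ≥ p log p - p log c - p q / c + p`, and integrating yields
`KL(p‖q) ≥ -h(p) - log ∫ p q` (Jensen's inequality for `log` under the law `p`).
The entropy term needs the second moment `∫ ‖y - μ*‖² p = n σ²`, obtained in polar coordinates
from the recursion `Γ(s + 1) = s Γ(s)`; the overlap `∫ p q` follows by completing the square,
`‖y - a‖² + ‖y - b‖² = 2 ‖y - (a + b) / 2‖² + ‖a - b‖² / 2`.

Integration of the pointwise bound requires `p log (p / q)` to be integrable, since otherwise its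
Bochner integral would be `0`. The tangent-line bound is an integrable minorant; a majorant comes
from `q ≥ w_j p_j` for one index with `w_j > 0`, as `log (p / p_j)` grows at most quadratically.
-/

lemma integral_exp_neg_mul_sq_norm_sub {n : ℕ} {b : ℝ} (hb : 0 < b)
    (a : EuclideanSpace ℝ (Fin n)) :
    ∫ y, Real.exp (-b * ‖y - a‖ ^ 2) = (Real.pi / b) ^ ((n : ℝ) / 2) := by
  rw [integral_sub_right_eq_self (fun y => Real.exp (-b * ‖y‖ ^ 2)) a,
    GaussianFourier.integral_rexp_neg_mul_sq_norm hb, finrank_euclideanSpace_fin]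

lemma integrable_exp_neg_mul_sq_norm_sub {n : ℕ} {b : ℝ} (hb : 0 < b)
    (a : EuclideanSpace ℝ (Fin n)) :
    Integrable fun y => Real.exp (-b * ‖y - a‖ ^ 2) := by
  apply Integrable.of_integral_ne_zero
  rw [integral_exp_neg_mul_sq_norm_sub hb]
  have := Real.pi_pos
  positivity

/-- Second moment of an unnormalised Gaussian. In polar coordinates both this integral and the
total mass are the same multiple of a Gamma integral, so the unknown volume of the unit ball
cancels from their ratio. -/
lemma integral_sq_norm_mul_exp {n : ℕ} (hn : 1 ≤ n) {b : ℝ} (hb : 0 < b)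
    (a : EuclideanSpace ℝ (Fin n)) :
    ∫ y, ‖y - a‖ ^ 2 * Real.exp (-b * ‖y - a‖ ^ 2) =
      (n : ℝ) / (2 * b) * (Real.pi / b) ^ ((n : ℝ) / 2) := by
  have : Nontrivial (EuclideanSpace ℝ (Fin n)) := by
    apply Module.nontrivial_of_finrank_pos (R := ℝ)
    rw [finrank_euclideanSpace_fin]; omega
  have hn' : (1 : ℝ) ≤ n := by exact_mod_cast hn
  have h0 := GaussianFourier.integral_rexp_neg_mul_sq_norm (V := EuclideanSpace ℝ (Fin n)) hb
  rw [integral_sub_right_eq_self (fun y => ‖y‖ ^ 2 * Real.exp (-b * ‖y‖ ^ 2)) a]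
  rw [finrank_euclideanSpace_fin] at h0
  rw [← h0, integral_fun_norm_addHaar volume (fun r => r ^ 2 * Real.exp (-b * r ^ 2)),
    integral_fun_norm_addHaar volume (fun r => Real.exp (-b * r ^ 2)), finrank_euclideanSpace_fin]
  have e1 : ∫ r in Set.Ioi (0 : ℝ), r ^ (n - 1) • Real.exp (-b * r ^ 2) =
      b ^ (-(n : ℝ) / 2) * (1 / 2) * Real.Gamma ((n : ℝ) / 2) := by
    have h := integral_rpow_mul_exp_neg_mul_rpow (p := 2) (q := (n : ℝ) - 1) two_pos
      (by linarith) hb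
    rw [sub_add_cancel] at h
    rw [← h]
    refine setIntegral_congr_fun measurableSet_Ioi fun r _ => ?_
    obtain ⟨k, rfl⟩ : ∃ k, n = k + 1 := ⟨n - 1, by omega⟩
    simp
  have e2 : ∫ r in Set.Ioi (0 : ℝ), r ^ (n - 1) • (r ^ 2 * Real.exp (-b * r ^ 2)) =
      b ^ (-((n : ℝ) / 2 + 1)) * (1 / 2) * Real.Gamma ((n : ℝ) / 2 + 1) := by
    have h := integral_rpow_mul_exp_neg_mul_rpow (p := 2) (q := ((n + 1 : ℕ) : ℝ)) two_pos
      (by push_cast; linarith) hb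
    have e : ((n + 1 : ℕ) + 1 : ℝ) / 2 = (n : ℝ) / 2 + 1 := by push_cast; ring
    rw [neg_div, e] at h
    rw [← h]
    refine setIntegral_congr_fun measurableSet_Ioi fun r _ => ?_
    obtain ⟨k, rfl⟩ : ∃ k, n = k + 1 := ⟨n - 1, by omega⟩
    simp only [Real.rpow_two, Real.rpow_natCast, smul_eq_mul, Nat.add_sub_cancel]
    ring
  rw [e1, e2, Real.Gamma_add_one (by positivity), neg_add, Real.rpow_add hb, Real.rpow_neg_one,
    neg_div]
  simp only [nsmul_eq_mul, smul_eq_mul]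
  field_simp

lemma integrable_sq_norm_mul_exp {n : ℕ} (hn : 1 ≤ n) {b : ℝ} (hb : 0 < b)
    (a : EuclideanSpace ℝ (Fin n)) :
    Integrable fun y => ‖y - a‖ ^ 2 * Real.exp (-b * ‖y - a‖ ^ 2) := by
  apply Integrable.of_integral_ne_zero
  rw [integral_sq_norm_mul_exp hn hb]
  have := Real.pi_pos
  positivity

lemma exp_mul_exp_eq_midpoint {n : ℕ} (b : ℝ) (y a c : EuclideanSpace ℝ (Fin n)) :
    Real.exp (-b * ‖y - a‖ ^ 2) * Real.exp (-b * ‖y - c‖ ^ 2) =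
      Real.exp (-(b / 2) * ‖a - c‖ ^ 2) *
        Real.exp (-(2 * b) * ‖y - (1 / 2 : ℝ) • (a + c)‖ ^ 2) := by
  have h := parallelogram_law_with_norm ℝ (y - a) (y - c)
  have e1 : (y - a) + (y - c) = (2 : ℝ) • (y - (1 / 2 : ℝ) • (a + c)) := by module
  have e2 : (y - a) - (y - c) = -(a - c) := by abel
  rw [e1, e2, norm_neg, norm_smul, Real.norm_eq_abs, abs_of_pos two_pos] at h
  rw [← Real.exp_add, ← Real.exp_add]
  congr 1
  linear_combination (b / 2) * h

/-- The tangent line of `log` at `c` bounds `Q ↦ P * log (P / Q)` from below. -/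
lemma mul_log_div_ge {P Q c : ℝ} (hP : 0 < P) (hQ : 0 < Q) (hc : 0 < c) :
    P * Real.log P - P * Real.log c - P * Q / c + P ≤ P * Real.log (P / Q) := by
  have h := Real.log_le_sub_one_of_pos (div_pos hQ hc)
  rw [Real.log_div hQ.ne' hc.ne'] at h
  rw [Real.log_div hP.ne' hQ.ne']
  have h2 := mul_le_mul_of_nonneg_left h hP.le
  have e : P * (Q / c - 1) = P * Q / c - P := by ring
  linarith

/-- KL divergence of an isotropic Gaussian from a Gaussian mixture is
bounded below by `(n/2)(log 2 − 1) − log(Σ_j w_j exp(−‖μ*−μ_j‖²/(4σ²)))`. -/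
theorem kl_gaussian_mixture_lower_bound (n N : ℕ) (hn : 1 ≤ n)
    (σ : ℝ) (hσ : 0 < σ)
    (μstar : EuclideanSpace ℝ (Fin n)) (μ : Fin N → EuclideanSpace ℝ (Fin n))
    (w : Fin N → ℝ) (hw : ∀ j, 0 ≤ w j) (hwsum : ∑ j, w j = 1)
    (p : EuclideanSpace ℝ (Fin n) → ℝ)
    (hp : ∀ y, p y = (2 * Real.pi * σ ^ 2) ^ (-(n : ℝ) / 2) *
      Real.exp (-‖y - μstar‖ ^ 2 / (2 * σ ^ 2)))
    (q : EuclideanSpace ℝ (Fin n) → ℝ)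
    (hq : ∀ y, q y = ∑ j, w j * ((2 * Real.pi * σ ^ 2) ^ (-(n : ℝ) / 2) *
      Real.exp (-‖y - μ j‖ ^ 2 / (2 * σ ^ 2)))) :
    ((n : ℝ) / 2) * (Real.log 2 - 1) -
        Real.log (∑ j, w j * Real.exp (-‖μstar - μ j‖ ^ 2 / (4 * σ ^ 2)))
      ≤ ∫ y, p y * Real.log (p y / q y) := by
  have hpi := Real.pi_pos
  obtain ⟨b, hb⟩ : ∃ b, b = 1 / (2 * σ ^ 2) := ⟨_, rfl⟩
  obtain ⟨C, hC⟩ : ∃ C, C = (2 * Real.pi * σ ^ 2) ^ (-(n : ℝ) / 2) := ⟨_, rfl⟩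
  obtain ⟨S, hS⟩ : ∃ S, S = ∑ j, w j * Real.exp (-‖μstar - μ j‖ ^ 2 / (4 * σ ^ 2)) := ⟨_, rfl⟩
  have hb0 : 0 < b := by rw [hb]; positivity
  have hC0 : 0 < C := by rw [hC]; positivity
  have hexp : ∀ x : ℝ, -x / (2 * σ ^ 2) = -b * x := fun x => by rw [hb]; ring
  have hexp' : ∀ x : ℝ, -x / (4 * σ ^ 2) = -(b / 2) * x := fun x => by rw [hb]; ring
  simp only [← hC, hexp] at hp hq
  obtain ⟨j₀, -, hj₀⟩ : ∃ j ∈ univ, 0 < w j :=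
    (sum_pos_iff_of_nonneg fun j _ => hw j).1 (by rw [hwsum]; exact one_pos)
  have hS0 : 0 < S := by
    rw [hS]
    exact sum_pos' (fun j _ => mul_nonneg (hw j) (Real.exp_pos _).le)
      ⟨j₀, mem_univ _, mul_pos hj₀ (Real.exp_pos _)⟩
  have hCpi : C * (Real.pi / b) ^ ((n : ℝ) / 2) = 1 := by
    have e : Real.pi / b = 2 * Real.pi * σ ^ 2 := by rw [hb]; field_simp
    rw [hC, e, ← Real.rpow_add (by positivity)]
    simp [neg_div]
  have hp0 : ∀ y, 0 < p y := fun y => by rw [hp]; positivity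
  have hqge : ∀ y, w j₀ * (C * Real.exp (-b * ‖y - μ j₀‖ ^ 2)) ≤ q y := fun y => by
    rw [hq]
    exact single_le_sum (f := fun j => w j * (C * Real.exp (-b * ‖y - μ j‖ ^ 2)))
      (fun j _ => mul_nonneg (hw j) (by positivity)) (mem_univ j₀)
  have hq0 : ∀ y, 0 < q y := fun y => lt_of_lt_of_le (by positivity) (hqge y)
  have hpI : Integrable p := by
    rw [funext hp]
    exact (integrable_exp_neg_mul_sq_norm_sub hb0 _).const_mul _
  have hp1 : ∫ y, p y = 1 := by
    simp_rw [hp]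
    rw [integral_const_mul, integral_exp_neg_mul_sq_norm_sub hb0, hCpi]
  have hp2eq : ∀ y, p y * ‖y - μstar‖ ^ 2 =
      C * (‖y - μstar‖ ^ 2 * Real.exp (-b * ‖y - μstar‖ ^ 2)) := fun y => by rw [hp]; ring
  have hp2I : Integrable fun y => p y * ‖y - μstar‖ ^ 2 := by
    simp_rw [hp2eq]
    exact (integrable_sq_norm_mul_exp hn hb0 _).const_mul _
  have hp2 : ∫ y, p y * ‖y - μstar‖ ^ 2 = n / (2 * b) := by
    simp_rw [hp2eq]
    rw [integral_const_mul, integral_sq_norm_mul_exp hn hb0]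
    linear_combination ((n : ℝ) / (2 * b)) * hCpi
  -- The overlap integral: completing the square turns each `p * p_j` into a Gaussian of width
  -- `σ / √2` centred at the midpoint.
  have hpqeq : ∀ y, p y * q y = ∑ j, C ^ 2 * (w j * Real.exp (-(b / 2) * ‖μstar - μ j‖ ^ 2)) *
      Real.exp (-(2 * b) * ‖y - (1 / 2 : ℝ) • (μstar + μ j)‖ ^ 2) := fun y => by
    rw [hp, hq, mul_sum]
    refine sum_congr rfl fun j _ => ?_
    linear_combination (C ^ 2 * w j) * exp_mul_exp_eq_midpoint b y μstar (μ j)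
  have hpqI' : ∀ j ∈ (univ : Finset (Fin N)), Integrable fun y =>
      C ^ 2 * (w j * Real.exp (-(b / 2) * ‖μstar - μ j‖ ^ 2)) *
      Real.exp (-(2 * b) * ‖y - (1 / 2 : ℝ) • (μstar + μ j)‖ ^ 2) := fun j _ =>
    (integrable_exp_neg_mul_sq_norm_sub (by positivity) _).const_mul _
  have hpqI : Integrable fun y => p y * q y := by
    simp_rw [hpqeq]
    exact integrable_finsetSum _ hpqI'
  obtain ⟨c, hc⟩ : ∃ c, c = C ^ 2 * (Real.pi / (2 * b)) ^ ((n : ℝ) / 2) * S := ⟨_, rfl⟩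
  have hc0 : 0 < c := by rw [hc]; positivity
  have hpq : ∫ y, p y * q y = c := by
    simp_rw [hpqeq]
    rw [integral_finsetSum _ hpqI', hc, hS, mul_sum]
    refine sum_congr rfl fun j _ => ?_
    rw [integral_const_mul, integral_exp_neg_mul_sq_norm_sub (by positivity), hexp']
    ring
  have hlogp : ∀ y, Real.log (p y) = Real.log C - b * ‖y - μstar‖ ^ 2 := fun y => by
    rw [hp, Real.log_mul hC0.ne' (Real.exp_pos _).ne', Real.log_exp]; ring
  have hlow : ∀ y, (Real.log C - Real.log c + 1) * p y - b * (p y * ‖y - μstar‖ ^ 2) -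
      c⁻¹ * (p y * q y) ≤ p y * Real.log (p y / q y) := fun y => by
    have h := mul_log_div_ge (hp0 y) (hq0 y) hc0
    rw [hlogp y] at h
    refine le_trans (le_of_eq ?_) h
    ring
  have hupp : ∀ y, p y * Real.log (p y / q y) ≤
      (2 * b * ‖μstar - μ j₀‖ ^ 2 - Real.log (w j₀)) * p y +
        b * (p y * ‖y - μstar‖ ^ 2) := fun y => by
    have h := Real.log_le_log (by positivity) (hqge y)
    rw [Real.log_mul hj₀.ne' (by positivity), Real.log_mul hC0.ne' (Real.exp_pos _).ne',
      Real.log_exp] at h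
    have h2 : ‖y - μ j₀‖ ^ 2 ≤ 2 * ‖y - μstar‖ ^ 2 + 2 * ‖μstar - μ j₀‖ ^ 2 := by
      have h3 := norm_add_le (y - μstar) (μstar - μ j₀)
      rw [sub_add_sub_cancel] at h3
      nlinarith [norm_nonneg (y - μ j₀), sq_nonneg (‖y - μstar‖ - ‖μstar - μ j₀‖)]
    have h4 := mul_le_mul_of_nonneg_left h2 hb0.le
    rw [Real.log_div (hp0 y).ne' (hq0 y).ne', hlogp]
    have h5 : Real.log C - b * ‖y - μstar‖ ^ 2 - Real.log (q y) ≤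
        2 * b * ‖μstar - μ j₀‖ ^ 2 - Real.log (w j₀) + b * ‖y - μstar‖ ^ 2 := by linarith
    refine (mul_le_mul_of_nonneg_left h5 (hp0 y).le).trans (le_of_eq ?_)
    ring
  have hI1 : Integrable fun y => (Real.log C - Real.log c + 1) * p y -
      b * (p y * ‖y - μstar‖ ^ 2) := (hpI.const_mul (Real.log C - Real.log c + 1)).sub (hp2I.const_mul b)
  have hlowI := hI1.sub (hpqI.const_mul c⁻¹)
  have huppI := (hpI.const_mul (2 * b * ‖μstar - μ j₀‖ ^ 2 - Real.log (w j₀))).add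
    (hp2I.const_mul b)
  have hpm : Measurable p := by rw [funext hp]; fun_prop
  have hqm : Measurable q := by rw [funext hq]; fun_prop
  have hI : Integrable fun y => p y * Real.log (p y / q y) :=
    integrable_of_le_of_le (by fun_prop) (ae_of_all _ hlow) (ae_of_all _ hupp) hlowI huppI
  have hint := integral_mono hlowI hI hlow
  have hval : ∫ y, ((Real.log C - Real.log c + 1) * p y - b * (p y * ‖y - μstar‖ ^ 2) -
      c⁻¹ * (p y * q y)) = Real.log C - Real.log c - n / 2 := by
    rw [integral_sub hI1 (hpqI.const_mul c⁻¹),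
      integral_sub (hpI.const_mul _) (hp2I.const_mul b), integral_const_mul, integral_const_mul,
      integral_const_mul, hp1, hp2, hpq]
    field_simp
    ring
  have hlogc : Real.log c = Real.log C - (n : ℝ) / 2 * Real.log 2 + Real.log S := by
    have e : c = C * (2 : ℝ) ^ (-((n : ℝ) / 2)) * S := by
      rw [hc, mul_comm 2 b, ← div_div, Real.div_rpow (by positivity) two_pos.le,
        Real.rpow_neg two_pos.le]
      linear_combination (C * ((2 : ℝ) ^ ((n : ℝ) / 2))⁻¹ * S) * hCpi
    rw [e, Real.log_mul (by positivity) hS0.ne', Real.log_mul hC0.ne' (by positivity),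
      Real.log_rpow two_pos]
    ring
  rw [← hS]
  refine le_trans (le_of_eq ?_) (hval.symm.le.trans hint)
  rw [hlogc]
  ring
end

section
/- Let n ≥ 1, let A be a symmetric n×n real matrix, let x̂_1, …, x̂_N be points of ℝ^n, let w_1, …, w_N be strictly positive reals with Σ_i w_i = 1, and let c > 0. Define p_i(y) = c · exp(−⟨y − x̂_i, A(y − x̂_i)⟩/2) and r_j(y) = p_j(y) / Σ_i w_i p_i(y). Then for every j and every y ∈ ℝ^n, the function y ↦ log r_j(y) is differentiable at y and its gradient equals A( x̂_j − μ^♯(y) ), where μ^♯(y) = Σ_i ( w_i p_i(y) / Σ_k w_k p_k(y) ) x̂_i is the posterior-weighted mean of the points x̂_i. -/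
open Finset
open scoped RealInnerProductSpace

/-!
By symmetry of `A`, each quadratic form `y ↦ -⟪y - a, A (y - a)⟫ / 2` has gradient `-A (y - a)`, so
`∇ p i = -p i • A (y - xhat i)`. Write `Z = ∑ i, w i * p i`, which is positive. Then
`∇ log (p j / Z) = ∇ log p j - Z⁻¹ • ∇ Z` equals
`-A (y - xhat j) + ∑ i, (w i * p i / Z) • A (y - xhat i)`; the posterior weights `w i * p i / Z` sum to
`1`, so the terms in `A y` cancel.
-/

/-- The function `q y = c * exp (-⟪y - a, A (y - a)⟫ / 2)`, with `A` symmetric, has gradient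
`-q y • A (y - a)`; the symmetry of `A` merges the two terms of the derivative of the quadratic
form. -/
lemma hasFDerivAt_gaussian {E : Type*} [NormedAddCommGroup E] [InnerProductSpace ℝ E]
    (A : E →L[ℝ] E) (hA : ∀ x y : E, ⟪A x, y⟫ = ⟪x, A y⟫) (c : ℝ) (a y : E) :
    HasFDerivAt (fun y => c * Real.exp (-⟪y - a, A (y - a)⟫ / 2))
      (-(c * Real.exp (-⟪y - a, A (y - a)⟫ / 2)) • innerSL ℝ (A (y - a))) y := by
  have hid : HasFDerivAt (fun y : E => y - a) (ContinuousLinearMap.id ℝ E) y :=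
    (hasFDerivAt_id y).sub_const a
  have hexp := (((hid.inner ℝ (A.hasFDerivAt.comp y hid)).neg.mul_const (2⁻¹ : ℝ)).exp).const_mul c
  simp only [← div_eq_mul_inv] at hexp
  refine hexp.congr_fderiv ?_
  ext v
  have h1 : ⟪v, A (y - a)⟫ = ⟪A (y - a), v⟫ := real_inner_comm _ _
  have h2 : ⟪y - a, A v⟫ = ⟪A (y - a), v⟫ := (hA _ _).symm
  simp [-map_sub, fderivInnerCLM_apply, h1, h2]
  ring

/-- the log-likelihood-ratio `log r_j` of the RBPF Bayesian update is
differentiable, with gradient `A(x̂_j − μ^♯(y))` where `μ^♯(y)` is the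
posterior-weighted mean of the points `x̂_i`. -/
theorem gradient_log_likelihood_ratio (n N : ℕ) (hn : 1 ≤ n)
    (A : EuclideanSpace ℝ (Fin n) →L[ℝ] EuclideanSpace ℝ (Fin n))
    (hA : ∀ x y : EuclideanSpace ℝ (Fin n), ⟪A x, y⟫ = ⟪x, A y⟫)
    (xhat : Fin N → EuclideanSpace ℝ (Fin n))
    (w : Fin N → ℝ) (hw : ∀ i, 0 < w i) (hwsum : ∑ i, w i = 1)
    (c : ℝ) (hc : 0 < c)
    (p : Fin N → EuclideanSpace ℝ (Fin n) → ℝ)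
    (hp : ∀ i y, p i y = c * Real.exp (-⟪y - xhat i, A (y - xhat i)⟫ / 2))
    (j : Fin N) (y : EuclideanSpace ℝ (Fin n)) :
    HasGradientAt (fun y' => Real.log (p j y' / ∑ i, w i * p i y'))
      (A (xhat j - ∑ i, (w i * p i y / ∑ k, w k * p k y) • xhat i)) y := by
  have hpos : ∀ i y, 0 < p i y := fun i y => by rw [hp]; positivity
  have hZpos : ∀ y, 0 < ∑ i, w i * p i y := fun y =>
    Finset.sum_pos (fun i _ => mul_pos (hw i) (hpos i y)) ⟨j, Finset.mem_univ j⟩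
  have hder : ∀ i, HasFDerivAt (p i) (-(p i y) • innerSL ℝ (A (y - xhat i))) y := fun i => by
    rw [hp i y, show p i = _ from funext (hp i)]
    exact hasFDerivAt_gaussian A hA c (xhat i) y
  have hZ := HasFDerivAt.fun_sum (u := Finset.univ) fun i _ => (hder i).const_mul (w i)
  have hlog := ((hder j).log (hpos j y).ne').sub (hZ.log (hZpos y).ne')
  have hfun : (fun y' => Real.log (p j y' / ∑ i, w i * p i y')) =
      fun y' => Real.log (p j y') - Real.log (∑ i, w i * p i y') :=
    funext fun y' => Real.log_div (hpos j y').ne' (hZpos y').ne'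
  rw [hasGradientAt_iff_hasFDerivAt, hfun]
  refine hlog.congr_fderiv ?_
  ext v
  have hj := (hpos j y).ne'
  have hZ0 := (hZpos y).ne'
  have hsplit : ∑ i, w i * (p i y * (⟪A y, v⟫ - ⟪A (xhat i), v⟫)) =
      (∑ i, w i * p i y) * ⟪A y, v⟫ - ∑ i, w i * p i y * ⟪A (xhat i), v⟫ := by
    rw [Finset.sum_mul, ← Finset.sum_sub_distrib]
    exact Finset.sum_congr rfl fun i _ => by ring
  have hmean : ∑ i, w i * p i y / (∑ k, w k * p k y) * ⟪A (xhat i), v⟫ =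
      (∑ k, w k * p k y)⁻¹ * ∑ i, w i * p i y * ⟪A (xhat i), v⟫ := by
    rw [Finset.mul_sum]
    exact Finset.sum_congr rfl fun i _ => by ring
  simp only [map_sub, map_sum, map_smul, sub_apply,
    smul_apply, _root_.sum_apply, innerSL_apply_apply,
    InnerProductSpace.toDual_apply_apply, smul_eq_mul, mul_neg, Finset.sum_neg_distrib,
    neg_smul, neg_apply, hsplit, hmean]
  field_simp
  ring
end

section
/- Let n ≥ 1, let A be a symmetric positive semidefinite n×n real matrix, let x̂_1, …, x̂_N be points of ℝ^n with diameter D = max_{i,k} ‖x̂_i − x̂_k‖, let w_1, …, w_N be strictly positive reals with Σ_i w_i = 1, and let c > 0. Define p_i(y) = c · exp(−⟨y − x̂_i, A(y − x̂_i)⟩/2) and r_j(y) = p_j(y) / Σ_i w_i p_i(y). Then for every j, the function y ↦ log r_j(y) is Lipschitz on ℝ^n with constant ‖A‖·D, where ‖A‖ is the operator norm; equivalently, |log r_j(y_1) − log r_j(y_2)| ≤ ‖A‖ · D · ‖y_1 − y_2‖ for all y_1, y_2. -/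
/-!
For a fixed symmetric `A`, the quadratic terms cancel in the ratio of two of the Gaussian
likelihoods, so `log (p j y / p i y)` is affine in `y` with linear part `⟪A (x̂ j - x̂ i), y⟫`; it is
therefore Lipschitz with constant `‖A‖ * D`. Hence `p j a * p i b ≤ exp K * (p j b * p i a)` with
`K = ‖A‖ * D * ‖a - b‖`, for all `i`. Averaging over `i` with the weights `w i` gives
`r j a ≤ exp K * r j b`
for `r j y = p j y / ∑ i, w i * p i y`, and exchanging `a` and `b` gives the two-sided bound on the logarithms.
-/

open Finset
open scoped RealInnerProductSpace

/-- The quadratic terms cancel in a difference of two quadratics with the same symmetric `A`, so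
the mixed second difference is bilinear in the two displacements. -/
lemma quadratic_second_difference {E : Type*} [NormedAddCommGroup E] [InnerProductSpace ℝ E]
    (A : E →L[ℝ] E) (hA : ∀ x y : E, ⟪A x, y⟫ = ⟪x, A y⟫) (u v a b : E) :
    (-⟪a - u, A (a - u)⟫ / 2 + -⟪b - v, A (b - v)⟫ / 2)
      - (-⟪b - u, A (b - u)⟫ / 2 + -⟪a - v, A (a - v)⟫ / 2) = ⟪A (u - v), a - b⟫ := by
  have h₁ := hA a u
  have h₂ := hA a v
  have h₃ := hA b u
  have h₄ := hA b v
  rw [real_inner_comm] at h₁ h₂ h₃ h₄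
  simp only [map_sub, inner_sub_left, inner_sub_right, hA]
  linarith

/-- the log-likelihood-ratio `log r_j` of the RBPF Bayesian update is
Lipschitz with constant `‖A‖·D`, where `D = max_{i,k} ‖x̂_i − x̂_k‖` is the particle
cloud diameter and `‖A‖` the operator norm of the (symmetric PSD) matrix `A`. -/
theorem log_likelihood_ratio_lipschitz (n N : ℕ) (hn : 1 ≤ n) (hN : 1 ≤ N)
    (A : EuclideanSpace ℝ (Fin n) →L[ℝ] EuclideanSpace ℝ (Fin n))
    (hA : ∀ x y : EuclideanSpace ℝ (Fin n), ⟪A x, y⟫ = ⟪x, A y⟫)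
    (hA_psd : ∀ x : EuclideanSpace ℝ (Fin n), 0 ≤ ⟪x, A x⟫)
    (xhat : Fin N → EuclideanSpace ℝ (Fin n))
    (D : ℝ) (hD : D = ⨆ i, ⨆ k, ‖xhat i - xhat k‖)
    (w : Fin N → ℝ) (hw : ∀ i, 0 < w i) (hwsum : ∑ i, w i = 1)
    (c : ℝ) (hc : 0 < c)
    (p : Fin N → EuclideanSpace ℝ (Fin n) → ℝ)
    (hp : ∀ i y, p i y = c * Real.exp (-⟪y - xhat i, A (y - xhat i)⟫ / 2))
    (j : Fin N) (y₁ y₂ : EuclideanSpace ℝ (Fin n)) :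
    |Real.log (p j y₁ / ∑ i, w i * p i y₁) - Real.log (p j y₂ / ∑ i, w i * p i y₂)| ≤
      ‖A‖ * D * ‖y₁ - y₂‖ := by
  have hp_pos : ∀ i y, 0 < p i y := fun i y => by rw [hp]; positivity
  have hS_pos : ∀ y, 0 < ∑ i, w i * p i y := fun y =>
    Finset.sum_pos (fun i _ => mul_pos (hw i) (hp_pos i y)) ⟨j, Finset.mem_univ j⟩
  have hdiam : ∀ i k, ‖xhat i - xhat k‖ ≤ D := fun i k => by
    rw [hD]
    exact (le_ciSup (f := fun k => ‖xhat i - xhat k‖) (Set.finite_range _).bddAbove k).trans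
      (le_ciSup (f := fun i => ⨆ k, ‖xhat i - xhat k‖) (Set.finite_range _).bddAbove i)
  have key : ∀ a b, Real.log (p j a / ∑ i, w i * p i a) - Real.log (p j b / ∑ i, w i * p i b) ≤
      ‖A‖ * D * ‖a - b‖ := by
    intro a b
    have hpair : ∀ i, p j a * p i b ≤ Real.exp (‖A‖ * D * ‖a - b‖) * (p j b * p i a) := by
      intro i
      have hK : ⟪A (xhat j - xhat i), a - b⟫ ≤ ‖A‖ * D * ‖a - b‖ :=
        calc ⟪A (xhat j - xhat i), a - b⟫ ≤ ‖A (xhat j - xhat i)‖ * ‖a - b‖ :=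
              real_inner_le_norm _ _
          _ ≤ ‖A‖ * D * ‖a - b‖ := by
              gcongr
              exact (A.le_opNorm _).trans (by gcongr; exact hdiam j i)
      rw [← quadratic_second_difference A hA, sub_le_iff_le_add] at hK
      have hexp := Real.exp_le_exp.mpr hK
      simp only [Real.exp_add] at hexp
      simp only [hp]
      have := mul_le_mul_of_nonneg_left hexp (mul_pos hc hc).le
      linarith
    have hsum : p j a * ∑ i, w i * p i b ≤
        Real.exp (‖A‖ * D * ‖a - b‖) * p j b * ∑ i, w i * p i a := by
      rw [Finset.mul_sum, Finset.mul_sum]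
      refine Finset.sum_le_sum fun i _ => ?_
      have := mul_le_mul_of_nonneg_left (hpair i) (hw i).le
      linarith
    have hratio : p j a / ∑ i, w i * p i a ≤
        Real.exp (‖A‖ * D * ‖a - b‖) * (p j b / ∑ i, w i * p i b) := by
      rw [← mul_div_assoc, div_le_div_iff₀ (hS_pos a) (hS_pos b)]
      exact hsum
    have hlog := Real.log_le_log (div_pos (hp_pos j a) (hS_pos a)) hratio
    rw [Real.log_mul (Real.exp_pos _).ne' (div_pos (hp_pos j b) (hS_pos b)).ne',
      Real.log_exp] at hlog
    linarith
  rw [abs_sub_le_iff]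
  refine ⟨key y₁ y₂, ?_⟩
  rw [norm_sub_rev]
  exact key y₂ y₁
end
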